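/- Let W be a finite set, let P : W → ℝ be a function with P(w) ≥ 0 for all w ∈ W and ∑_{w ∈ W} P(w) = 1, let S be a set, let M : W → Set S be a function assigning to each element of W a set of 'models', and let Q ⊆ S be a predicate. Then ∑_{w : M(w) ≠ ∅ and ∀ m ∈ M(w), m ∈ Q} P(w) + ∑_{w : ∃ m ∈ M(w), m ∉ Q} P(w) + ∑_{w : M(w) = ∅} P(w) = 1. -/

import Mathlib

open Classical in
/-- The paper's identity `P̲(q) + P̄(not q) + P(inc) = 1` for the credal semantics:
the probabilities of the worlds all of whose models satisfy the query (and which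
have at least one model), of the worlds with some model not satisfying the query,
and of the worlds with no model, sum to one. -/
theorem lower_upper_inconsistent_sum {W S : Type*} [Fintype W]
    (P : W → ℝ) (M : W → Set S) (Q : Set S)
    (hP : ∀ w, 0 ≤ P w) (hsum : ∑ w, P w = 1) :
    (∑ w ∈ Finset.univ.filter (fun w => M w ≠ ∅ ∧ ∀ m ∈ M w, m ∈ Q), P w) +
    (∑ w ∈ Finset.univ.filter (fun w => ∃ m ∈ M w, m ∉ Q), P w) +
    (∑ w ∈ Finset.univ.filter (fun w => M w = ∅), P w) = 1 := by
  rw [Finset.sum_filter, Finset.sum_filter, Finset.sum_filter, ← Finset.sum_add_distrib,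
    ← Finset.sum_add_distrib, ← hsum]
  refine Finset.sum_congr rfl fun w _ => ?_
  by_cases h1 : M w = ∅
  · simp [h1]
  · by_cases h2 : ∃ m ∈ M w, m ∉ Q
    · have h3 : ¬ (M w ≠ ∅ ∧ ∀ m ∈ M w, m ∈ Q) := by
        rintro ⟨_, h⟩
        obtain ⟨m, hm, hq⟩ := h2
        exact hq (h m hm)
      rw [if_neg h3, if_pos h2, if_neg h1]
      ring
    · have h3 : M w ≠ ∅ ∧ ∀ m ∈ M w, m ∈ Q :=
        ⟨h1, fun m hm => by_contra fun hq => h2 ⟨m, hm, hq⟩⟩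
      rw [if_pos h3, if_neg h2, if_neg h1]
      ring
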